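/- Let (K,|·|) be a normed field, f ∈ K[z] a polynomial of degree n ≥ 2 which splits over K, ξ ∈ Kⁿ a root-vector of f, and 1 ≤ p ≤ ∞ with conjugate exponent q. Suppose the initial guess x⁰ ∈ Kⁿ has pairwise distinct components and satisfies h(E(x⁰)) ≤ 2, where E(x) = ‖(x − ξ)/d(x)‖_p and h(t) = (1 + 2^{1/q} t)(1 + t/(n−1)^{1/p})^{n−1}. Then f has only simple zeros in K and the Weierstrass iteration x^{k+1} = x^k − W(x^k) is well defined and converges to ξ, with, for all k ≥ 0 and each index i: |x^{k+1}_i − ξ_i| ≤ θ λ^{2^k} |x^k_i − ξ_i| and |x^k_i − ξ_i| ≤ θ^k λ^{2^k − 1} |x⁰_i − ξ_i|, where λ = β(E(x⁰))/ψ(E(x⁰)), θ = ψ(E(x⁰)), β(t) = (1 + t/(n−1)^{1/p})^{n−1} − 1 and ψ(t) = 1 − 2^{1/q} t (1 + t/(n−1)^{1/p})^{n−1}. -/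

import Mathlib

open Finset Filter Topology
open scoped ENNReal

noncomputable def pnorm {n : ℕ} (p : ℝ≥0∞) (v : Fin n → ℝ) : ℝ :=
  if p = ⊤ then ⨆ i, |v i| else (∑ i, |v i| ^ p.toReal) ^ (1 / p.toReal)

noncomputable def epow (a : ℝ) (p : ℝ≥0∞) : ℝ :=
  if p = ⊤ then 1 else a ^ (1 / p.toReal)

noncomputable def dsep {K : Type*} [NormedField K] {n : ℕ} (x : Fin n → K) (i : Fin n) : ℝ :=
  sInf {r : ℝ | ∃ j, j ≠ i ∧ r = ‖x i - x j‖}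

noncomputable def Wcorr {K : Type*} [NormedField K] {n : ℕ} (f : Polynomial K)
    (x : Fin n → K) (i : Fin n) : K :=
  Polynomial.eval (x i) f / (f.leadingCoeff * ∏ j ∈ Finset.univ.erase i, (x i - x j))

def IsRootVector {K : Type*} [NormedField K] {n : ℕ} (f : Polynomial K) (ξ : Fin n → K) : Prop :=
  ∀ z : K, Polynomial.eval z f = f.leadingCoeff * ∏ i, (z - ξ i)

lemma aux_epow_pos {a : ℝ} (ha : 0 < a) (p : ℝ≥0∞) : 0 < epow a p := by
  unfold epow
  split_ifs
  · exact one_pos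
  · exact Real.rpow_pos_of_pos ha _

lemma aux_pnorm_nonneg {n : ℕ} (p : ℝ≥0∞) (v : Fin n → ℝ) : 0 ≤ pnorm p v := by
  unfold pnorm
  split_ifs
  · exact Real.iSup_nonneg fun i => abs_nonneg _
  · exact Real.rpow_nonneg (Finset.sum_nonneg fun i _ => Real.rpow_nonneg (abs_nonneg _) _) _

lemma aux_pnorm_mono {n : ℕ} (p : ℝ≥0∞) (hp : 1 ≤ p) (v w : Fin n → ℝ) (c : ℝ) (hc : 0 ≤ c)
    (hv : ∀ i, 0 ≤ v i) (hw : ∀ i, 0 ≤ w i) (h : ∀ i, v i ≤ c * w i) :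
    pnorm p v ≤ c * pnorm p w := by
  unfold pnorm
  split_ifs with hpt
  · rcases isEmpty_or_nonempty (Fin n) with he | he
    · simp
    · refine ciSup_le fun i => ?_
      rw [abs_of_nonneg (hv i)]
      refine (h i).trans (mul_le_mul_of_nonneg_left ?_ hc)
      rw [← abs_of_nonneg (hw i)]
      exact le_ciSup (f := fun i => |w i|) (Set.finite_range _).bddAbove i
  · have hp1 : 1 ≤ p.toReal := by
      rw [← ENNReal.toReal_one]; exact ENNReal.toReal_mono hpt hp
    have hp0 : 0 < p.toReal := by linarith
    have h1 : ∑ i, |v i| ^ p.toReal ≤ c ^ p.toReal * ∑ i, |w i| ^ p.toReal := by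
      rw [Finset.mul_sum]
      refine Finset.sum_le_sum fun i _ => ?_
      rw [abs_of_nonneg (hv i), abs_of_nonneg (hw i), ← Real.mul_rpow hc (hw i)]
      exact Real.rpow_le_rpow (hv i) (h i) hp0.le
    have h0 : 0 ≤ ∑ i, |v i| ^ p.toReal :=
      Finset.sum_nonneg fun i _ => Real.rpow_nonneg (abs_nonneg _) _
    have h0' : 0 ≤ ∑ i, |w i| ^ p.toReal :=
      Finset.sum_nonneg fun i _ => Real.rpow_nonneg (abs_nonneg _) _
    refine (Real.rpow_le_rpow h0 h1 (by positivity)).trans (le_of_eq ?_)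
    rw [Real.mul_rpow (by positivity) h0', ← Real.rpow_mul hc, mul_one_div_cancel hp0.ne',
      Real.rpow_one]

lemma aux_sum_le {n : ℕ} (p : ℝ≥0∞) (hp : 1 ≤ p) (v : Fin n → ℝ) (hv : ∀ i, 0 ≤ v i)
    (s : Finset (Fin n)) (hs : 0 < s.card) :
    ∑ i ∈ s, v i ≤ (s.card : ℝ) / epow (s.card : ℝ) p * pnorm p v := by
  have hm : (0 : ℝ) < s.card := by exact_mod_cast hs
  unfold pnorm epow
  split_ifs with hpt
  · rw [div_one, ← nsmul_eq_mul]
    refine Finset.sum_le_card_nsmul _ _ _ fun i _ => ?_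
    rw [← abs_of_nonneg (hv i)]
    exact le_ciSup (f := fun i => |v i|) (Set.finite_range _).bddAbove i
  · have hp1 : 1 ≤ p.toReal := by
      rw [← ENNReal.toReal_one]; exact ENNReal.toReal_mono hpt hp
    have hp0 : 0 < p.toReal := by linarith
    have h1 := Real.rpow_sum_le_const_mul_sum_rpow s v hp1
    have h2 : ∑ i ∈ s, |v i| ^ p.toReal ≤ ∑ i, |v i| ^ p.toReal :=
      Finset.sum_le_sum_of_subset_of_nonneg (Finset.subset_univ _)
        fun i _ _ => Real.rpow_nonneg (abs_nonneg _) _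
    have h0' : 0 ≤ ∑ i, |v i| ^ p.toReal :=
      Finset.sum_nonneg fun i _ => Real.rpow_nonneg (abs_nonneg _) _
    have h3 : (∑ i ∈ s, |v i|) ^ p.toReal ≤
        (s.card : ℝ) ^ (p.toReal - 1) * ∑ i, |v i| ^ p.toReal :=
      h1.trans (mul_le_mul_of_nonneg_left h2 (by positivity))
    have h4 : ∑ i ∈ s, v i = ∑ i ∈ s, |v i| :=
      Finset.sum_congr rfl fun i _ => (abs_of_nonneg (hv i)).symm
    have h5 : 0 ≤ ∑ i ∈ s, |v i| := Finset.sum_nonneg fun i _ => abs_nonneg _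
    rw [h4]
    have h6 := Real.rpow_le_rpow (Real.rpow_nonneg h5 _) h3 (by positivity : 0 ≤ 1 / p.toReal)
    rw [← Real.rpow_mul h5, mul_one_div_cancel hp0.ne', Real.rpow_one,
      Real.mul_rpow (by positivity) h0', ← Real.rpow_mul hm.le] at h6
    refine h6.trans (le_of_eq ?_)
    congr 1
    rw [show (p.toReal - 1) * (1 / p.toReal) = 1 - 1 / p.toReal by field_simp,
      Real.rpow_sub hm, Real.rpow_one]

lemma aux_conj (p q : ℝ≥0∞) (hp : 1 ≤ p) (hpq : 1 / p + 1 / q = 1) :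
    epow 2 q = 2 / epow 2 p := by
  have hp0 : p ≠ 0 := by rintro rfl; simp at hp
  have hq0 : q ≠ 0 := by rintro rfl; simp at hpq
  have h := congrArg ENNReal.toReal hpq
  rw [ENNReal.toReal_add (by simp [hp0]) (by simp [hq0])] at h
  simp only [one_div, ENNReal.toReal_inv, ENNReal.toReal_one] at h
  have key : ∀ r : ℝ≥0∞, epow 2 r = (2 : ℝ) ^ (r.toReal)⁻¹ := by
    intro r
    unfold epow
    split_ifs with hr
    · simp [hr]
    · rw [one_div]
  rw [key, key, show (q.toReal)⁻¹ = 1 - (p.toReal)⁻¹ by linarith, Real.rpow_sub (by norm_num),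
    Real.rpow_one]

lemma aux_dsep_le {K : Type*} [NormedField K] {n : ℕ} (x : Fin n → K) {i j : Fin n}
    (hij : j ≠ i) : dsep x i ≤ ‖x i - x j‖ := by
  refine csInf_le ⟨0, ?_⟩ ⟨j, hij, rfl⟩
  rintro r ⟨k, _, rfl⟩
  exact norm_nonneg _

lemma aux_exists_ne {n : ℕ} (hn : 2 ≤ n) (i : Fin n) : ∃ j, j ≠ i := by
  haveI : Nontrivial (Fin n) := Fin.nontrivial_iff_two_le.mpr hn
  exact exists_ne i

lemma aux_le_dsep {K : Type*} [NormedField K] {n : ℕ} (hn : 2 ≤ n) (x : Fin n → K) (i : Fin n)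
    (c : ℝ) (h : ∀ j, j ≠ i → c ≤ ‖x i - x j‖) : c ≤ dsep x i := by
  obtain ⟨j, hj⟩ := aux_exists_ne hn i
  refine le_csInf ⟨_, j, hj, rfl⟩ ?_
  rintro r ⟨k, hk, rfl⟩
  exact h k hk

lemma aux_dsep_pos {K : Type*} [NormedField K] {n : ℕ} (hn : 2 ≤ n) (x : Fin n → K)
    (hx : Function.Injective x) (i : Fin n) : 0 < dsep x i := by
  have hne : {r : ℝ | ∃ j, j ≠ i ∧ r = ‖x i - x j‖}.Nonempty := by
    obtain ⟨j, hj⟩ := aux_exists_ne hn i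
    exact ⟨_, j, hj, rfl⟩
  have hfin : {r : ℝ | ∃ j, j ≠ i ∧ r = ‖x i - x j‖}.Finite := by
    refine (Set.finite_range fun j => ‖x i - x j‖).subset ?_
    rintro r ⟨j, _, rfl⟩
    exact ⟨j, rfl⟩
  obtain ⟨j, hj, h⟩ := hne.csInf_mem hfin
  unfold dsep
  rw [h, norm_pos_iff, sub_ne_zero]
  exact fun e => hj (hx e).symm

lemma aux_prod_sub_one {K : Type*} [NormedField K] {ι : Type*} (s : Finset ι) (u : ι → K) :
    ‖∏ j ∈ s, (1 + u j) - 1‖ ≤ ∏ j ∈ s, (1 + ‖u j‖) - 1 := by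
  classical
  induction s using Finset.induction_on with
  | empty => simp
  | insert a s ha ih =>
    rw [Finset.prod_insert ha, Finset.prod_insert ha]
    have e : (1 + u a) * ∏ j ∈ s, (1 + u j) - 1 =
        (1 + u a) * (∏ j ∈ s, (1 + u j) - 1) + u a := by ring
    have h1 : ‖1 + u a‖ ≤ 1 + ‖u a‖ := (norm_add_le _ _).trans (by simp)
    rw [e]
    calc _ ≤ ‖1 + u a‖ * ‖∏ j ∈ s, (1 + u j) - 1‖ + ‖u a‖ := by
          rw [← norm_mul]; exact norm_add_le _ _
      _ ≤ (1 + ‖u a‖) * (∏ j ∈ s, (1 + ‖u j‖) - 1) + ‖u a‖ := by gcongr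
      _ = _ := by ring

lemma aux_amgm {ι : Type*} (s : Finset ι) (hs : 0 < s.card) (z : ι → ℝ) (hz : ∀ i ∈ s, 0 ≤ z i)
    (c : ℝ) (hc : ∑ i ∈ s, z i ≤ s.card * c) :
    ∏ i ∈ s, (1 + z i) ≤ (1 + c) ^ s.card := by
  have hm : (0 : ℝ) < s.card := by exact_mod_cast hs
  have hz' : ∀ i ∈ s, 0 ≤ 1 + z i := fun i hi => by linarith [hz i hi]
  have h := Real.geom_mean_le_arith_mean_weighted s (fun _ => (s.card : ℝ)⁻¹) (fun i => 1 + z i)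
    (fun i _ => by positivity) (by simp [hm.ne']) hz'
  rw [Real.finsetProd_rpow s _ hz', ← Finset.mul_sum, Finset.sum_add_distrib] at h
  have h2 : (∏ i ∈ s, (1 + z i)) ^ (s.card : ℝ)⁻¹ ≤ 1 + c := by
    refine h.trans ?_
    rw [inv_mul_le_iff₀ hm]
    simp
    linarith
  have h0 := Finset.prod_nonneg hz'
  calc _ = ((∏ i ∈ s, (1 + z i)) ^ (s.card : ℝ)⁻¹) ^ s.card :=
        (Real.rpow_inv_natCast_pow h0 hs.ne').symm
    _ ≤ _ := pow_le_pow_left₀ (Real.rpow_nonneg h0 _) h2 _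

lemma aux_pow_convex (c s : ℝ) (hc : 0 ≤ c) (hc1 : c ≤ 1) (hs : 0 ≤ s) (m : ℕ) :
    (1 + c * s) ^ m - 1 ≤ c * ((1 + s) ^ m - 1) := by
  induction m with
  | zero => simp
  | succ m ih =>
    have hB : 0 ≤ (1 + s) ^ m - 1 := by linarith [one_le_pow₀ (by linarith : 1 ≤ 1 + s) (n := m)]
    set B := (1 + s) ^ m - 1 with hBd
    have e1 : (1 + s) ^ (m + 1) = (1 + B) * (1 + s) := by rw [hBd]; ring
    have h1 : (1 + c * s) ^ (m + 1) ≤ (1 + c * B) * (1 + c * s) := by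
      rw [pow_succ]
      exact mul_le_mul_of_nonneg_right (by linarith) (by positivity)
    have h2 : c * (c * (s * B)) ≤ c * (1 * (s * B)) := by gcongr
    rw [e1]
    nlinarith

/-- one Weierstrass step -/
lemma aux_step {K : Type*} [NormedField K] {n : ℕ} (hn : 2 ≤ n)
    (f : Polynomial K) (hf : f ≠ 0)
    (ξ : Fin n → K) (hroot : IsRootVector f ξ)
    (p : ℝ≥0∞) (hp : 1 ≤ p) (y y' : Fin n → K) (hy : Function.Injective y)
    (hy' : y' = fun i => y i - Wcorr f y i) (t P a : ℝ)
    (ha : a = 2 / epow 2 p)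
    (ht : t = pnorm p (fun i => ‖y i - ξ i‖ / dsep y i))
    (hP : P = (1 + t / epow ((n : ℝ) - 1) p) ^ (n - 1))
    (hpos : 0 < 1 - a * t * P) :
    Function.Injective ξ ∧ Function.Injective y' ∧
    (∀ i, ‖y' i - ξ i‖ ≤ (P - 1) * ‖y i - ξ i‖) ∧
    pnorm p (fun i => ‖y' i - ξ i‖ / dsep y' i) ≤ (P - 1) / (1 - a * t * P) * t := by
  have hlc : f.leadingCoeff ≠ 0 := Polynomial.leadingCoeff_ne_zero.mpr hf
  have hd : ∀ i, 0 < dsep y i := aux_dsep_pos hn y hy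
  have ht0 : 0 ≤ t := ht ▸ aux_pnorm_nonneg _ _
  have hn1 : (0 : ℝ) < (n : ℝ) - 1 := by
    have : (2 : ℝ) ≤ n := by exact_mod_cast hn
    linarith
  have hb : 0 < epow ((n : ℝ) - 1) p := aux_epow_pos hn1 p
  have hP1 : 1 ≤ P := by
    rw [hP]; exact one_le_pow₀ (by have : 0 ≤ t / epow ((n : ℝ) - 1) p := by positivity
                                   linarith)
  set v : Fin n → ℝ := fun i => ‖y i - ξ i‖ / dsep y i with hv
  have hv0 : ∀ i, 0 ≤ v i := fun i => div_nonneg (norm_nonneg _) (hd i).le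
  have hvd : ∀ i, ‖y i - ξ i‖ = v i * dsep y i := fun i => by
    rw [hv]; exact (div_mul_cancel₀ _ (hd i).ne').symm
  have hcard : ∀ i : Fin n, (Finset.univ.erase i).card = n - 1 := fun i => by simp
  have hcast : ((n - 1 : ℕ) : ℝ) = (n : ℝ) - 1 := by
    rw [Nat.cast_sub (by omega)]; simp
  -- pairwise sums
  have hpair : ∀ i j, i ≠ j → ‖y i - ξ i‖ + ‖y j - ξ j‖ ≤ a * t * ‖y i - y j‖ := by
    intro i j hij
    have h1 := aux_sum_le p hp v hv0 {i, j} (by rw [Finset.card_pair hij]; norm_num)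
    rw [Finset.card_pair hij, Finset.sum_pair hij, ← ht] at h1
    push_cast at h1
    rw [← ha] at h1
    have h2 : dsep y i ≤ ‖y i - y j‖ := aux_dsep_le y hij.symm
    have h3 : dsep y j ≤ ‖y i - y j‖ := by rw [norm_sub_rev]; exact aux_dsep_le y hij
    rw [hvd i, hvd j]
    nlinarith [mul_le_mul_of_nonneg_left h2 (hv0 i), mul_le_mul_of_nonneg_left h3 (hv0 j),
      mul_le_mul_of_nonneg_right h1 (norm_nonneg (y i - y j))]
  -- the factors
  let u : Fin n → Fin n → K := fun i j => (y j - ξ j) / (y i - y j)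
  have hu : ∀ i j, j ≠ i → ‖u i j‖ ≤ v j := by
    intro i j hij
    have h3 : dsep y j ≤ ‖y i - y j‖ := by rw [norm_sub_rev]; exact aux_dsep_le y hij.symm
    simp only [u, norm_div, hv]
    exact div_le_div_of_nonneg_left (norm_nonneg _) (hd j) h3
  have hW : ∀ i, Wcorr f y i = (y i - ξ i) * ∏ j ∈ Finset.univ.erase i, (1 + u i j) := by
    intro i
    unfold Wcorr
    rw [hroot (y i), ← Finset.mul_prod_erase Finset.univ _ (Finset.mem_univ i),
      mul_div_mul_left _ _ hlc, mul_div_assoc, ← Finset.prod_div_distrib]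
    congr 1
    refine Finset.prod_congr rfl fun j hj => ?_
    have hne : y i - y j ≠ 0 := sub_ne_zero.mpr fun e => (Finset.ne_of_mem_erase hj) (hy e).symm
    simp only [u]
    field_simp
    ring
  have hprod : ∀ i, ∏ j ∈ Finset.univ.erase i, (1 + ‖u i j‖) ≤ P := by
    intro i
    have hc0 : 0 < (Finset.univ.erase i).card := by rw [hcard]; omega
    have h1 := aux_sum_le p hp v hv0 (Finset.univ.erase i) hc0
    rw [← ht, hcard, hcast] at h1
    have h2 : ∑ j ∈ Finset.univ.erase i, ‖u i j‖ ≤ ∑ j ∈ Finset.univ.erase i, v j :=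
      Finset.sum_le_sum fun j hj => hu i j (Finset.ne_of_mem_erase hj)
    have h3 := aux_amgm (Finset.univ.erase i) hc0 (fun j => ‖u i j‖) (fun _ _ => norm_nonneg _)
      (t / epow ((n : ℝ) - 1) p) (by
        rw [hcard, hcast]
        refine (h2.trans h1).trans (le_of_eq ?_)
        ring)
    rw [hcard] at h3
    rw [hP]; exact h3
  have hWn : ∀ i, ‖Wcorr f y i‖ ≤ ‖y i - ξ i‖ * P := by
    intro i
    rw [hW, norm_mul]
    refine mul_le_mul_of_nonneg_left ?_ (norm_nonneg _)
    refine le_trans ?_ (hprod i)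
    rw [norm_prod]
    exact Finset.prod_le_prod (fun _ _ => norm_nonneg _)
      fun j _ => (norm_add_le _ _).trans (by simp)
  have herr : ∀ i, ‖y' i - ξ i‖ ≤ (P - 1) * ‖y i - ξ i‖ := by
    intro i
    have e : y' i - ξ i = -((∏ j ∈ Finset.univ.erase i, (1 + u i j) - 1) * (y i - ξ i)) := by
      rw [hy']; simp only [hW]; ring
    rw [e, norm_neg, norm_mul]
    refine mul_le_mul_of_nonneg_right ?_ (norm_nonneg _)
    linarith [aux_prod_sub_one (Finset.univ.erase i) (u i), hprod i]
  have hsep : ∀ i j, i ≠ j → (1 - a * t * P) * ‖y i - y j‖ ≤ ‖y' i - y' j‖ := by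
    intro i j hij
    have e : y i - y j = (y' i - y' j) + Wcorr f y i - Wcorr f y j := by rw [hy']; ring
    have h1 : ‖y i - y j‖ ≤ ‖y' i - y' j‖ + ‖Wcorr f y i‖ + ‖Wcorr f y j‖ := by
      conv_lhs => rw [e]
      exact (norm_sub_le _ _).trans (by gcongr; exact norm_add_le _ _)
    nlinarith [hWn i, hWn j, mul_le_mul_of_nonneg_right (hpair i j hij) (by linarith : 0 ≤ P)]
  have hypos : ∀ i j, i ≠ j → 0 < ‖y i - y j‖ := fun i j hij => by
    rw [norm_pos_iff, sub_ne_zero]; exact fun e => hij (hy e)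
  have hdsep : ∀ i, (1 - a * t * P) * dsep y i ≤ dsep y' i := fun i =>
    aux_le_dsep hn _ _ _ fun j hj =>
      (mul_le_mul_of_nonneg_left (aux_dsep_le y hj) hpos.le).trans (hsep i j hj.symm)
  have ha0 : 0 < a := by rw [ha]; have := aux_epow_pos (by norm_num : (0:ℝ) < 2) p; positivity
  have hinj' : Function.Injective y' := by
    intro i j hij
    by_contra hne
    have h1 := hsep i j hne
    rw [hij, sub_self, norm_zero] at h1
    nlinarith [mul_pos hpos (hypos i j hne)]
  refine ⟨?_, hinj', herr, ?_⟩
  · intro i j hij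
    by_contra hne
    have h1 : ‖y i - y j‖ ≤ ‖y i - ξ i‖ + ‖y j - ξ j‖ := by
      have e : y i - y j = (y i - ξ i) - (y j - ξ j) := by rw [hij]; ring
      rw [e]; exact norm_sub_le _ _
    have h2 := hpair i j hne
    have h3 : a * t < 1 := by
      have : a * t * 1 ≤ a * t * P := by gcongr
      linarith
    nlinarith [hypos i j hne]
  · rw [ht]
    rw [← ht]
    have hPm : 0 ≤ P - 1 := by linarith
    have hd' : ∀ i, 0 < dsep y' i := aux_dsep_pos hn y' hinj'
    have := aux_pnorm_mono p hp (fun i => ‖y' i - ξ i‖ / dsep y' i) v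
      ((P - 1) / (1 - a * t * P)) (by positivity) (fun i => div_nonneg (norm_nonneg _) (hd' i).le)
      hv0 (fun i => by
        have h1 : 0 < (1 - a * t * P) * dsep y i := mul_pos hpos (hd i)
        calc _ ≤ ((P - 1) * ‖y i - ξ i‖) / ((1 - a * t * P) * dsep y i) :=
              div_le_div₀ (by positivity) (herr i) h1 (hdsep i)
          _ = _ := by rw [hv]; exact mul_div_mul_comm _ _ _ _)
    rwa [← ht] at this

/-- second-kind local convergence theorem. If `x⁰` has pairwise distinct
components and `h(E(x⁰)) ≤ 2` where `E(x) = ‖(x−ξ)/d(x)‖_p` and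
`h(t) = (1 + 2^{1/q}t)(1 + t/(n−1)^{1/p})^{n−1}`, then `f` has only simple zeros and
the Weierstrass iteration converges to `ξ` with estimates governed by
`λ = β(E(x⁰))/ψ(E(x⁰))` and `θ = ψ(E(x⁰))`. -/
theorem weierstrass_local_convergence_second_kind
    {K : Type*} [NormedField K] {n : ℕ} (hn : 2 ≤ n)
    (f : Polynomial K) (hdeg : f.natDegree = n)
    (ξ : Fin n → K) (hroot : IsRootVector f ξ)
    (p q : ℝ≥0∞) (hp : 1 ≤ p) (hpq : 1 / p + 1 / q = 1)
    (E : (Fin n → K) → ℝ)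
    (hE : ∀ y : Fin n → K, E y = pnorm p (fun i => ‖y i - ξ i‖ / dsep y i))
    (ψ β : ℝ → ℝ)
    (hψ : ∀ t : ℝ, ψ t = 1 - epow 2 q * t * (1 + t / epow ((n : ℝ) - 1) p) ^ (n - 1))
    (hβ : ∀ t : ℝ, β t = (1 + t / epow ((n : ℝ) - 1) p) ^ (n - 1) - 1)
    (x : ℕ → Fin n → K) (hx0 : Function.Injective (x 0))
    (hinit : (1 + epow 2 q * E (x 0)) * (1 + E (x 0) / epow ((n : ℝ) - 1) p) ^ (n - 1) ≤ 2)
    (hiter : ∀ k : ℕ, x (k+1) = fun i => x k i - Wcorr f (x k) i) :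
    Function.Injective ξ ∧
    (∀ k : ℕ, Function.Injective (x k)) ∧
    (∀ i : Fin n, Filter.Tendsto (fun k => x k i) Filter.atTop (nhds (ξ i))) ∧
    (∀ k : ℕ, ∀ i : Fin n,
      ‖x (k+1) i - ξ i‖ ≤ ψ (E (x 0)) * (β (E (x 0)) / ψ (E (x 0))) ^ 2 ^ k * ‖x k i - ξ i‖) ∧
    (∀ k : ℕ, ∀ i : Fin n,
      ‖x k i - ξ i‖ ≤ ψ (E (x 0)) ^ k * (β (E (x 0)) / ψ (E (x 0))) ^ (2 ^ k - 1) *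
        ‖x 0 i - ξ i‖) := by

  have hf : f ≠ 0 := by rintro rfl; simp at hdeg; omega
  have ha := aux_conj p q hp hpq
  have hn1 : (0 : ℝ) < (n : ℝ) - 1 := by
    have : (2 : ℝ) ≤ n := by exact_mod_cast hn
    linarith
  have hb : 0 < epow ((n : ℝ) - 1) p := aux_epow_pos hn1 p
  have ha0 : 0 < epow 2 q := aux_epow_pos (by norm_num) q
  set a := epow 2 q with had
  set b := epow ((n : ℝ) - 1) p with hbd
  have hE0 : ∀ y, 0 ≤ E y := fun y => by rw [hE]; exact aux_pnorm_nonneg _ _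
  -- scaling
  have hPge : ∀ s, 0 ≤ s → 1 ≤ (1 + s / b) ^ (n - 1) := fun s hs =>
    one_le_pow₀ (by have : 0 ≤ s / b := by positivity
                    linarith)
  have hPmono : ∀ s r, 0 ≤ s → s ≤ r → (1 + s / b) ^ (n - 1) ≤ (1 + r / b) ^ (n - 1) :=
    fun s r hs hsr => by gcongr
  have hβ0 : ∀ s, 0 ≤ s → 0 ≤ β s := fun s hs => by rw [hβ]; linarith [hPge s hs]
  have hβscale : ∀ c s r, 0 ≤ c → c ≤ 1 → 0 ≤ r → 0 ≤ s → s ≤ c * r → β s ≤ c * β r := by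
    intro c s r hc hc1 hr hs hsr
    rw [hβ, hβ]
    have h1 := aux_pow_convex c (r / b) hc hc1 (by positivity) (n - 1)
    have h2 := hPmono s (c * r) hs hsr
    rw [mul_div_assoc] at h2
    linarith
  have hψmono : ∀ s r, 0 ≤ s → s ≤ r → ψ r ≤ ψ s := by
    intro s r hs hsr
    rw [hψ, hψ]
    have h1 := hPmono s r hs hsr
    have h2 := hPge s hs
    have : a * s * (1 + s / b) ^ (n - 1) ≤ a * r * (1 + r / b) ^ (n - 1) := by
      have : 0 ≤ r := hs.trans hsr
      gcongr
    linarith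
  set t := E (x 0) with htd
  have ht0 : 0 ≤ t := hE0 _
  have hβψ : β t ≤ ψ t := by
    rw [hβ, hψ]; nlinarith [hinit]
  have hψ1 : ψ t ≤ 1 := by
    rw [hψ]
    have := hPge t ht0
    have : 0 ≤ a * t * (1 + t / b) ^ (n - 1) := by positivity
    linarith
  have hβpos : 0 < t → 0 < β t := by
    intro h
    rw [hβ]
    have := one_lt_pow₀ (by have : 0 < t / b := by positivity
                            linarith : 1 < 1 + t / b) (by omega : n - 1 ≠ 0)
    linarith
  have hψpos : 0 < ψ t := by
    rcases ht0.eq_or_lt with h | h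
    · rw [← h, hψ]; simp
    · exact (hβpos h).trans_le hβψ
  have hβ1 : β t < 1 := by
    rcases ht0.eq_or_lt with h | h
    · rw [← h, hβ]; simp
    · refine hβψ.trans_lt ?_
      rw [hψ]
      have := hPge t ht0
      have : 0 < a * t * (1 + t / b) ^ (n - 1) := by positivity
      linarith
  set lam := β t / ψ t with hlam
  have hl0 : 0 ≤ lam := div_nonneg (hβ0 t ht0) hψpos.le
  have hl1 : lam ≤ 1 := (div_le_one hψpos).mpr hβψ
  have hθl : ψ t * lam = β t := by rw [hlam]; field_simp
  -- step
  have hstep : ∀ k, Function.Injective (x k) → E (x k) ≤ t →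
      Function.Injective ξ ∧ Function.Injective (x (k+1)) ∧
      (∀ i, ‖x (k+1) i - ξ i‖ ≤ β (E (x k)) * ‖x k i - ξ i‖) ∧
      E (x (k+1)) ≤ β (E (x k)) / ψ (E (x k)) * E (x k) := by
    intro k hk hkt
    have hp' := hψpos.trans_le (hψmono _ _ (hE0 (x k)) hkt)
    have h := aux_step hn f hf ξ hroot p hp (x k) (x (k+1)) hk (hiter k) (E (x k)) _ a ha
      (hE _) rfl (by rw [hψ] at hp'; exact hp')
    rw [← hE, ← hβ, ← hψ] at h
    exact h
  have hind : ∀ k, Function.Injective (x k) ∧ E (x k) ≤ lam ^ (2 ^ k - 1) * t := by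
    intro k
    induction k with
    | zero => exact ⟨hx0, by simp [← htd]⟩
    | succ k ih =>
      obtain ⟨hk, hEk⟩ := ih
      have hc0 : 0 ≤ lam ^ (2 ^ k - 1) := pow_nonneg hl0 _
      have hc1 : lam ^ (2 ^ k - 1) ≤ 1 := pow_le_one₀ hl0 hl1
      have hkt : E (x k) ≤ t := hEk.trans (mul_le_of_le_one_left ht0 hc1)
      obtain ⟨-, h2, -, h4⟩ := hstep k hk hkt
      refine ⟨h2, h4.trans ?_⟩
      have h5 : β (E (x k)) / ψ (E (x k)) ≤ lam ^ (2 ^ k - 1) * lam := by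
        rw [hlam, ← mul_div_assoc, ← hlam]
        exact div_le_div₀ (mul_nonneg hc0 (hβ0 t ht0))
          (hβscale _ _ _ hc0 hc1 ht0 (hE0 _) hEk) hψpos (hψmono _ _ (hE0 _) hkt)
      calc _ ≤ (lam ^ (2 ^ k - 1) * lam) * (lam ^ (2 ^ k - 1) * t) :=
            mul_le_mul h5 hEk (hE0 _) (mul_nonneg hc0 hl0)
        _ = lam ^ ((2 ^ k - 1) + 1 + (2 ^ k - 1)) * t := by ring
        _ = _ := by
          congr 2
          have := Nat.one_le_two_pow (n := k)
          rw [pow_succ]; omega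
  have hkt : ∀ k, E (x k) ≤ t := fun k =>
    (hind k).2.trans (mul_le_of_le_one_left ht0 (pow_le_one₀ hl0 hl1))
  have hA : ∀ k : ℕ, ∀ i : Fin n,
      ‖x (k+1) i - ξ i‖ ≤ ψ t * lam ^ 2 ^ k * ‖x k i - ξ i‖ := by
    intro k i
    refine ((hstep k (hind k).1 (hkt k)).2.2.1 i).trans
      (mul_le_mul_of_nonneg_right ?_ (norm_nonneg _))
    refine (hβscale _ _ _ (pow_nonneg hl0 _) (pow_le_one₀ hl0 hl1) ht0 (hE0 _)
      (hind k).2).trans (le_of_eq ?_)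
    rw [← hθl]
    have e : lam ^ 2 ^ k = lam ^ (2 ^ k - 1) * lam := by
      rw [← pow_succ, Nat.sub_add_cancel Nat.one_le_two_pow]
    rw [e]; ring
  have hB : ∀ k : ℕ, ∀ i : Fin n,
      ‖x k i - ξ i‖ ≤ ψ t ^ k * lam ^ (2 ^ k - 1) * ‖x 0 i - ξ i‖ := by
    intro k i
    induction k with
    | zero => simp
    | succ k ih =>
      calc _ ≤ ψ t * lam ^ 2 ^ k * ‖x k i - ξ i‖ := hA k i
        _ ≤ ψ t * lam ^ 2 ^ k * (ψ t ^ k * lam ^ (2 ^ k - 1) * ‖x 0 i - ξ i‖) :=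
            mul_le_mul_of_nonneg_left ih (mul_nonneg hψpos.le (pow_nonneg hl0 _))
        _ = ψ t ^ (k + 1) * lam ^ (2 ^ k + (2 ^ k - 1)) * ‖x 0 i - ξ i‖ := by
            rw [pow_add, pow_succ]; ring
        _ = _ := by
          congr 3
          have := Nat.one_le_two_pow (n := k)
          rw [pow_succ]; omega
  refine ⟨(hstep 0 hx0 le_rfl).1, fun k => (hind k).1, ?_, hA, hB⟩
  intro i
  have hC : ∀ k, ‖x k i - ξ i‖ ≤ β t ^ k * ‖x 0 i - ξ i‖ := by
    intro k
    induction k with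
    | zero => simp
    | succ k ih =>
      have h1 : ψ t * lam ^ 2 ^ k ≤ β t := by
        rw [← hθl]
        exact mul_le_mul_of_nonneg_left (pow_le_of_le_one hl0 hl1 (by positivity)) hψpos.le
      calc _ ≤ ψ t * lam ^ 2 ^ k * ‖x k i - ξ i‖ := hA k i
        _ ≤ β t * (β t ^ k * ‖x 0 i - ξ i‖) :=
          mul_le_mul h1 ih (norm_nonneg _) (hβ0 t ht0)
        _ = _ := by ring
  rw [tendsto_iff_norm_sub_tendsto_zero]
  refine squeeze_zero (fun k => norm_nonneg _) hC ?_
  simpa using (tendsto_pow_atTop_nhds_zero_of_lt_one (hβ0 t ht0) hβ1).mul_const ‖x 0 i - ξ i‖
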